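/- Let s be an integer and let a, z > 0 be real numbers with a ≠ 1 and z ≠ 1. Then f_q(z q^{s}, a) tends to ((1 − z a)/((a − 1)(1 − z))) · a^{−s} as q tends to 0 from the right (q ranging over (0,1)). -/

import Mathlib

open Filter Topology

/-- The q-theta function
`θ_q(x) = (x^{1/2} - x^{-1/2}) ∏_{i=1}^∞ (1 - x q^i)(1 - x⁻¹ q^i)`. -/
noncomputable def qTheta (q x : ℝ) : ℝ :=
  (Real.sqrt x - (Real.sqrt x)⁻¹) *
    ∏' i : ℕ, (1 - x * q ^ (i + 1)) * (1 - x⁻¹ * q ^ (i + 1))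

/-- `f_q(z, a) = θ_q(a z) / (θ_q(a) θ_q(z))`. -/
noncomputable def fTheta (q z a : ℝ) : ℝ :=
  qTheta q (a * z) / (qTheta q a * qTheta q z)


noncomputable def qP (q x : ℝ) : ℝ := ∏' i : ℕ, (1 - x * q ^ (i + 1))

lemma qP_summable (q x : ℝ) (h0 : 0 < q) (h1 : q < 1) :
    Summable (fun i : ℕ => -(x * q ^ (i + 1))) := by
  have h := (summable_geometric_of_lt_one h0.le h1).mul_left (-(x * q))
  refine h.congr fun i => ?_
  ring

lemma qP_mult (q x : ℝ) (h0 : 0 < q) (h1 : q < 1) :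
    Multipliable (fun i : ℕ => (1 - x * q ^ (i + 1))) := by
  have h := Real.multipliable_one_add_of_summable (qP_summable q x h0 h1)
  simpa only [sub_eq_add_neg] using h

lemma qTheta_eq (q x : ℝ) (h0 : 0 < q) (h1 : q < 1) :
    qTheta q x = (Real.sqrt x - (Real.sqrt x)⁻¹) * (qP q x * qP q x⁻¹) := by
  unfold qTheta qP
  rw [(qP_mult q x h0 h1).tprod_mul (qP_mult q x⁻¹ h0 h1)]

lemma qP_shift (q x : ℝ) (h0 : 0 < q) (h1 : q < 1) :
    qP q x = (1 - x * q) * qP q (x * q) := by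
  unfold qP
  have e : ∀ i : ℕ, (1 - x * q ^ (i + 1 + 1)) = (1 - x * q * q ^ (i + 1)) := fun i => by ring
  rw [tprod_eq_zero_mul' (f := fun i : ℕ => 1 - x * q ^ (i + 1))]
  · simp only [e]; simp
  · simp only [e]; exact qP_mult q (x * q) h0 h1

lemma qTheta_shift (q x : ℝ) (h0 : 0 < q) (h1 : q < 1) (hx : 0 < x) :
    qTheta q (x * q) = (-(Real.sqrt q)⁻¹ * x⁻¹) * qTheta q x := by
  rw [qTheta_eq q _ h0 h1, qTheta_eq q _ h0 h1, qP_shift q x h0 h1,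
    qP_shift q (x * q)⁻¹ h0 h1]
  have e : (x * q)⁻¹ * q = x⁻¹ := by field_simp
  rw [e, Real.sqrt_mul hx.le]
  obtain ⟨r, hr, rfl⟩ : ∃ r : ℝ, 0 < r ∧ x = r ^ 2 :=
    ⟨√x, Real.sqrt_pos.2 hx, (Real.sq_sqrt hx.le).symm⟩
  obtain ⟨p, hp, rfl⟩ : ∃ r : ℝ, 0 < r ∧ q = r ^ 2 :=
    ⟨√q, Real.sqrt_pos.2 h0, (Real.sq_sqrt h0.le).symm⟩
  rw [Real.sqrt_sq hr.le, Real.sqrt_sq hp.le]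
  generalize qP (p ^ 2) (r ^ 2 * p ^ 2) = A
  generalize qP (p ^ 2) (r ^ 2)⁻¹ = B
  field_simp
  ring

lemma fTheta_shift (q z a : ℝ) (h0 : 0 < q) (h1 : q < 1) (hz : 0 < z) (ha : 0 < a) :
    fTheta q (z * q) a = a⁻¹ * fTheta q z a := by
  unfold fTheta
  rw [← mul_assoc, qTheta_shift q (a * z) h0 h1 (by positivity), qTheta_shift q z h0 h1 hz]
  have hc : -(Real.sqrt q)⁻¹ * z⁻¹ ≠ 0 := by
    have := Real.sqrt_pos.2 h0
    simp [this.ne', hz.ne']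
  rw [mul_inv, show -(√q)⁻¹ * (a⁻¹ * z⁻¹) * qTheta q (a * z)
    = (-(√q)⁻¹ * z⁻¹) * (a⁻¹ * qTheta q (a * z)) by ring,
    show qTheta q a * (-(√q)⁻¹ * z⁻¹ * qTheta q z)
      = (-(√q)⁻¹ * z⁻¹) * (qTheta q a * qTheta q z) by ring,
    mul_div_mul_left _ _ hc, mul_div_assoc]

lemma fTheta_zpow (q z a : ℝ) (h0 : 0 < q) (h1 : q < 1) (hz : 0 < z) (ha : 0 < a) (s : ℤ) :
    fTheta q (z * q ^ s) a = fTheta q z a * a ^ (-s) := by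
  induction s using Int.induction_on with
  | zero => simp
  | succ n ih =>
    rw [zpow_add_one₀ h0.ne', ← mul_assoc, fTheta_shift q _ a h0 h1 (by positivity) ha, ih,
      neg_add, ← sub_eq_add_neg, zpow_sub_one₀ ha.ne']
    ring
  | pred n ih =>
    have h := fTheta_shift q (z * q ^ (-(n : ℤ) - 1)) a h0 h1 (by positivity) ha
    rw [mul_assoc, ← zpow_add_one₀ h0.ne', sub_add_cancel, ih] at h
    rw [show -(-(n : ℤ) - 1) = -(-(n : ℤ)) + 1 by ring, zpow_add_one₀ ha.ne', ← mul_assoc, h]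
    field_simp

lemma qP_bound (q x : ℝ) (h0 : 0 < q) (h1 : q < 1) :
    ‖qP q x - 1‖ ≤ Real.exp (|x| * q * (1 - q)⁻¹) - 1 := by
  have ht := ((qP_mult q x h0 h1).hasProd.sub_const 1).norm
  refine le_of_tendsto ht (Eventually.of_forall fun t => ?_)
  simp only [sub_eq_add_neg]
  have h := Finset.norm_prod_one_add_sub_one_le t (fun i : ℕ => -(x * q ^ (i + 1)))
  simp only [sub_eq_add_neg] at h
  refine h.trans ?_
  gcongr
  have hs : HasSum (fun i : ℕ => ‖-(x * q ^ (i + 1))‖) (|x| * q * (1 - q)⁻¹) := by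
    have := (hasSum_geometric_of_lt_one h0.le h1).mul_left (|x| * q)
    have e : (fun i : ℕ => ‖-(x * q ^ (i + 1))‖) = fun i : ℕ => |x| * q * q ^ i := by
      funext i
      rw [norm_neg, norm_mul, norm_pow, Real.norm_eq_abs, Real.norm_eq_abs, abs_of_pos h0]
      ring
    rw [e]
    exact this
  exact sum_le_hasSum t (fun _ _ => norm_nonneg _) hs

lemma qP_tendsto (x : ℝ) :
    Tendsto (fun q : ℝ => qP q x) (𝓝[Set.Ioo (0:ℝ) 1] 0) (𝓝 1) := by
  rw [tendsto_iff_norm_sub_tendsto_zero]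
  have hb : Tendsto (fun q : ℝ => Real.exp (|x| * q * (1 - q)⁻¹) - 1)
      (𝓝[Set.Ioo (0:ℝ) 1] 0) (𝓝 0) := by
    have hc : ContinuousAt (fun q : ℝ => Real.exp (|x| * q * (1 - q)⁻¹) - 1) 0 := by
      have : (1 - (0:ℝ)) ≠ 0 := by norm_num
      fun_prop (disch := assumption)
    have := hc.tendsto
    simp only [mul_zero, zero_mul, Real.exp_zero, sub_self] at this
    exact this.mono_left nhdsWithin_le_nhds
  refine squeeze_zero' (Eventually.of_forall fun _ => norm_nonneg _) ?_ hb
  filter_upwards [self_mem_nhdsWithin] with q hq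
  exact qP_bound q x hq.1 hq.2

lemma qTheta_tendsto (x : ℝ) :
    Tendsto (fun q : ℝ => qTheta q x) (𝓝[Set.Ioo (0:ℝ) 1] 0)
      (𝓝 (Real.sqrt x - (Real.sqrt x)⁻¹)) := by
  have h := ((qP_tendsto x).mul (qP_tendsto x⁻¹)).const_mul (Real.sqrt x - (Real.sqrt x)⁻¹)
  rw [mul_one, mul_one] at h
  refine h.congr' ?_
  filter_upwards [self_mem_nhdsWithin] with q hq
  exact (qTheta_eq q x hq.1 hq.2).symm

/-- For an integer `s` and reals `a, z > 0` with `a ≠ 1` and `z ≠ 1`,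
`f_q(z q^s, a) → ((1 - z a)/((a - 1)(1 - z))) a^{-s}` as `q → 0⁺`,
with `q` ranging over `(0,1)`. -/
theorem fTheta_limit_integral (s : ℤ) (a z : ℝ) (ha : 0 < a) (hz : 0 < z)
    (ha1 : a ≠ 1) (hz1 : z ≠ 1) :
    Tendsto (fun q : ℝ => fTheta q (z * q ^ s) a)
      (𝓝[Set.Ioo (0:ℝ) 1] 0)
      (𝓝 ((1 - z * a) / ((a - 1) * (1 - z)) * a ^ (-s))) := by
  have key : Tendsto (fun q : ℝ => fTheta q z a) (𝓝[Set.Ioo (0:ℝ) 1] 0)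
      (𝓝 ((1 - z * a) / ((a - 1) * (1 - z)))) := by
    obtain ⟨r, hr, rfl⟩ : ∃ r : ℝ, 0 < r ∧ z = r ^ 2 :=
      ⟨√z, Real.sqrt_pos.2 hz, (Real.sq_sqrt hz.le).symm⟩
    obtain ⟨p, hp, rfl⟩ : ∃ r : ℝ, 0 < r ∧ a = r ^ 2 :=
      ⟨√a, Real.sqrt_pos.2 ha, (Real.sq_sqrt ha.le).symm⟩
    have hz2 : 1 - r ^ 2 ≠ 0 := sub_ne_zero.2 hz1.symm
    have ha2 : p ^ 2 - 1 ≠ 0 := sub_ne_zero.2 ha1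
    have er : r - r⁻¹ = -(1 - r ^ 2) / r := by field_simp; ring
    have ep : p - p⁻¹ = (p ^ 2 - 1) / p := by field_simp
    have h := (qTheta_tendsto (p ^ 2 * r ^ 2)).div
      ((qTheta_tendsto (p ^ 2)).mul (qTheta_tendsto (r ^ 2))) (by
        rw [Real.sqrt_sq hr.le, Real.sqrt_sq hp.le, er, ep]
        exact mul_ne_zero (div_ne_zero ha2 hp.ne') (div_ne_zero (neg_ne_zero.2 hz2) hr.ne'))
    rw [Real.sqrt_mul (by positivity), Real.sqrt_sq hr.le, Real.sqrt_sq hp.le, er, ep] at h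
    have e : (1 - r ^ 2 * p ^ 2) / ((p ^ 2 - 1) * (1 - r ^ 2))
        = (p * r - (p * r)⁻¹) / ((p ^ 2 - 1) / p * (-(1 - r ^ 2) / r)) := by
      have e1 : p * r - (p * r)⁻¹ = -(1 - r ^ 2 * p ^ 2) / (p * r) := by
        field_simp
        ring
      have e2 : (p ^ 2 - 1) / p * (-(1 - r ^ 2) / r)
          = -((p ^ 2 - 1) * (1 - r ^ 2)) / (p * r) := by
        field_simp
      rw [e1, e2, div_div_div_cancel_right₀ (by positivity), neg_div_neg_eq]
    rw [e]
    exact h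
  refine (key.mul_const (a ^ (-s))).congr' ?_
  filter_upwards [self_mem_nhdsWithin] with q hq
  exact (fTheta_zpow q z a hq.1 hq.2 hz ha s).symm
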